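/- arXiv:1510.03033 — 2 statements merged into one kernel-verified Lean document; each statement's English description precedes it below -/
import Mathlib

section
/- For every composition I = (i_1, …, i_r) of n and every real number q, n! · g_I(q) = (1−q)^r · Σ_π q^{sinv(π)}, where the sum ranges over all permutitions π of size n with c(π) = I. Equivalently, the polynomial P_I(q) = n! g_I(q)/(1−q)^{ℓ(I)} is the generating polynomial of the statistic sinv over permutitions of composition I. -/
/-- `G q [i_k, …, i_1] t` is the iterated integral
`G_{(i_1,…,i_k)}(t) = ∫_q^t s^{i_k−1} G_{(i_1,…,i_{k−1})}(s) ds`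
(the list argument is the composition read in reverse). -/
noncomputable def G (q : ℝ) : List ℕ → ℝ → ℝ
  | [], _ => 1
  | i :: J, t => ∫ s in q..t, s ^ (i - 1) * G q J s

/-- The composition polynomial `g_I(q) = G_{(i_1,…,i_r)}(1)`. -/
noncomputable def g (q : ℝ) (I : List ℕ) : ℝ := G q I.reverse 1

/-- A permutition (set of lists) of size `n`, represented canonically: the list of
blocks, each block a nonempty list of distinct letters, the letters partitioning
`{1, …, n}`, and the blocks ordered by increasing value of their last letters. -/
def IsPermutition (n : ℕ) (L : List (List ℕ)) : Prop :=
  (∀ B ∈ L, B ≠ []) ∧ L.flatten.Nodup ∧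
    (∀ x, x ∈ L.flatten ↔ 1 ≤ x ∧ x ≤ n) ∧
    List.Chain' (· < ·) (L.map fun B => B.getLastD 0)

/-- `c(π)`: the composition of `n` formed by the block sizes, blocks being ordered by
increasing last letter. -/
def shape (L : List (List ℕ)) : List ℕ := L.map List.length

/-- `sinv(π)`: the number of letters strictly greater than the last letter of their block. -/
def sinv (L : List (List ℕ)) : ℕ :=
  (L.map fun B => B.countP fun x => decide (B.getLastD 0 < x)).sum

/-!
Substituting `t_j = q + (1 - q) * s_j` turns `g_I(q)` into `(1 - q) ^ r` times the integral of
`∏ j, (q + (1 - q) * s_j) ^ (i_j - 1)` over the increasing families `s` in the unit interval, and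
`q + (1 - q) * s` is the expectation of `if s < U then q else 1` for a uniform variable `U`. Putting
an independent uniform label on every letter position, with `s_j` the label of the last position of
the `j`-th block, the integral becomes the expectation of `q ^ sinv` restricted to the labellings
whose last letters increase. Only the relative order of the labels matters, and all `n!` orders are
equally likely, so `n!` times this expectation is the sum over permutitions.
-/

open MeasureTheory Set

section OrderPattern

variable {ι α E : Type*} [LinearOrder α]

/-- The strict order induced on the index set by a family of points. -/
def orderPattern (x : ι → α) (i j : ι) : Prop := x i < x j

lemma exists_equiv_orderPattern_eq [Fintype ι] {x : ι → α} (hx : x.Injective) {n : ℕ}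
    (hn : Fintype.card ι = n) : ∃ e : ι ≃ Fin n, orderPattern e = orderPattern x := by
  let := LinearOrder.lift' x hx
  let e := (Fintype.orderIsoFinOfCardEq ι hn).symm
  exact ⟨e.toEquiv, funext₂ fun i j => propext e.lt_iff_lt⟩

lemma sum_perm_orderPattern_comp [Fintype ι] [DecidableEq ι] [AddCommMonoid E]
    (φ : (ι → ι → Prop) → E) {x : ι → α} (hx : x.Injective) {n : ℕ} (hn : Fintype.card ι = n) :
    ∑ σ : Equiv.Perm ι, φ (orderPattern (x ∘ σ)) = ∑ e : ι ≃ Fin n, φ (orderPattern e) := by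
  obtain ⟨e, he⟩ := exists_equiv_orderPattern_eq hx hn
  refine Fintype.sum_equiv ((Equiv.refl ι).equivCongr e) _ _ fun σ => congrArg φ ?_
  exact funext₂ fun i j => (congrFun₂ he (σ i) (σ j)).symm

variable [TopologicalSpace α] [OrderClosedTopology α] [SecondCountableTopology α]
  [MeasurableSpace α] [OpensMeasurableSpace α] {μ : Measure α}

lemma measurable_orderPattern : Measurable (orderPattern : (ι → α) → ι → ι → Prop) :=
  measurable_pi_iff.2 fun i => measurable_pi_iff.2 fun j =>
    measurableSet_setOfPred.1 (measurableSet_lt (measurable_pi_apply i) (measurable_pi_apply j))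

variable [Fintype ι]

lemma integrable_comp_orderPattern [IsFiniteMeasure μ] [NormedAddCommGroup E]
    (φ : (ι → ι → Prop) → E) :
    Integrable (fun x => φ (orderPattern x)) (Measure.pi fun _ => μ) := by
  obtain ⟨C, hC⟩ := (Set.finite_range fun R => ‖φ R‖).bddAbove
  have hφ : StronglyMeasurable φ := .of_discrete
  exact .of_bound (hφ.comp_measurable measurable_orderPattern).aestronglyMeasurable C
    (.of_forall fun x => hC ⟨_, rfl⟩)

variable [IsProbabilityMeasure μ]

lemma ae_injective_pi [NullSingletonClass μ] :
    ∀ᵐ x : ι → α ∂Measure.pi fun _ => μ, x.Injective := by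
  have hne : ∀ᵐ z : α × α ∂μ.prod μ, z.1 ≠ z.2 := by
    refine (Measure.ae_prod_iff_ae_ae
      (measurableSet_eq_fun measurable_fst measurable_snd).compl).2 (.of_forall fun a => ?_)
    exact (Measure.ae_ne μ a).mono fun _ => Ne.symm
  have hpair (i j : ι) (hij : i ≠ j) : ∀ᵐ x ∂Measure.pi fun _ : ι => μ, x i ≠ x j := by
    have hindep := (ProbabilityTheory.iIndepFun_pi (μ := fun _ : ι => μ)
      (X := fun _ => id) fun _ => aemeasurable_id).indepFun hij
    simp only [id] at hindep
    rw [ProbabilityTheory.indepFun_iff_map_prod_eq_prod_map_map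
        (measurable_pi_apply i).aemeasurable (measurable_pi_apply j).aemeasurable,
      (measurePreserving_eval _ i).map_eq, (measurePreserving_eval _ j).map_eq] at hindep
    rw [← hindep] at hne
    exact ae_of_ae_map (f := fun x : ι → α => (x i, x j)) (by fun_prop) hne
  simp only [Function.injective_iff_pairwise_ne, Pairwise, ae_all_iff]
  exact hpair

theorem factorial_smul_integral_comp_orderPattern [NullSingletonClass μ] [DecidableEq ι]
    [NormedAddCommGroup E] [NormedSpace ℝ E] [CompleteSpace E] (φ : (ι → ι → Prop) → E)
    {n : ℕ} (hn : Fintype.card ι = n) :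
    n.factorial • ∫ x, φ (orderPattern x) ∂(Measure.pi fun _ : ι => μ) =
      ∑ e : ι ≃ Fin n, φ (orderPattern e) := by
  have hperm (σ : Equiv.Perm ι) : ∫ x, φ (orderPattern (x ∘ σ)) ∂(Measure.pi fun _ : ι => μ) =
      ∫ x, φ (orderPattern x) ∂(Measure.pi fun _ : ι => μ) :=
    (measurePreserving_arrowCongr' (fun _ : ι => μ) (fun _ => μ) σ.symm (.refl α)
      fun _ => .id μ).integral_comp' fun x => φ (orderPattern x)
  calc n.factorial • ∫ x, φ (orderPattern x) ∂(Measure.pi fun _ : ι => μ)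
      = ∑ σ : Equiv.Perm ι, ∫ x, φ (orderPattern (x ∘ σ)) ∂(Measure.pi fun _ : ι => μ) := by
        simp only [hperm, Finset.sum_const, Finset.card_univ, Fintype.card_perm, hn]
    _ = ∫ x, ∑ σ : Equiv.Perm ι, φ (orderPattern (x ∘ σ)) ∂(Measure.pi fun _ : ι => μ) := by
        refine (integral_finsetSum _ fun σ _ => ?_).symm
        exact integrable_comp_orderPattern fun R => φ fun i j => R (σ i) (σ j)
    _ = ∫ _, ∑ e : ι ≃ Fin n, φ (orderPattern e) ∂(Measure.pi fun _ : ι => μ) :=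
        integral_congr_ae <| ae_injective_pi.mono fun x hx => sum_perm_orderPattern_comp φ hx hn
    _ = ∑ e : ι ≃ Fin n, φ (orderPattern e) := by
        simp only [integral_const, probReal_univ, one_smul]

end OrderPattern

section Simplex

variable {α : Type*} {r : ℕ}

/-- The increasing families of `r` points below `t`: the domain of integration of the iterated
integral `G` once its variables are rescaled to the unit interval. -/
def increasingBelow [Preorder α] (r : ℕ) (t : α) : Set (Fin r → α) :=
  {s | StrictMono s ∧ ∀ j, s j < t}

lemma snoc_mem_increasingBelow_iff [Preorder α] {y : Fin r → α} {a t : α} :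
    (Fin.snoc y a : Fin (r + 1) → α) ∈ increasingBelow (r + 1) t ↔
      a < t ∧ y ∈ increasingBelow r a := by
  simp only [increasingBelow, mem_ofPred_eq, StrictMono, Fin.forall_fin_succ', Fin.snoc_castSucc,
    Fin.snoc_last, Fin.castSucc_lt_castSucc_iff, Fin.castSucc_lt_last, lt_self_iff_false,
    Fin.not_lt.2 (Fin.le_last _), forall_true_left, IsEmpty.forall_iff, implies_true, and_true]
  constructor
  · rintro ⟨h, -, hat⟩
    exact ⟨hat, fun i j => (h i).1 j, fun i => (h i).2⟩
  · rintro ⟨hat, hy, hya⟩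
    exact ⟨fun i => ⟨fun j => hy (a := i) (b := j), hya i⟩, fun i => (hya i).trans hat, hat⟩

variable [MeasurableSpace α] {μ : Measure α}

lemma integral_pi_fin_succ [SigmaFinite μ] {E : Type*} [NormedAddCommGroup E] [NormedSpace ℝ E]
    {F : (Fin (r + 1) → α) → E} (hF : Integrable F (Measure.pi fun _ => μ)) :
    ∫ s, F s ∂(Measure.pi fun _ => μ) =
      ∫ a, ∫ y, F (Fin.snoc y a) ∂(Measure.pi fun _ => μ) ∂μ := by
  have hsplit := (measurePreserving_piFinSuccAbove (fun _ : Fin (r + 1) => μ) (Fin.last r)).symm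
  have hsnoc (p : α × (Fin r → α)) :
      (MeasurableEquiv.piFinSuccAbove (fun _ => α) (Fin.last r)).symm p = Fin.snoc p.2 p.1 :=
    Fin.insertNth_last' p.1 p.2
  have hF' := hsplit.integrable_comp_of_integrable hF
  rw [← hsplit.integral_comp']
  simp only [Function.comp_def, hsnoc] at hF' ⊢
  exact integral_prod _ hF'

variable [LinearOrder α] [TopologicalSpace α] [OrderClosedTopology α]
  [SecondCountableTopology α] [OpensMeasurableSpace α]

lemma measurableSet_increasingBelow (t : α) : MeasurableSet (increasingBelow r t) := by
  simp only [increasingBelow, StrictMono, ofPred_and, ofPred_forall]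
  refine .inter (.iInter fun i => .iInter fun j => .iInter fun _ => ?_) (.iInter fun j => ?_)
  · exact measurableSet_lt (measurable_pi_apply i) (measurable_pi_apply j)
  · exact measurableSet_lt (measurable_pi_apply j) measurable_const

lemma setIntegral_increasingBelow_succ [SigmaFinite μ] {𝕜 : Type*} [RCLike 𝕜]
    {f : Fin (r + 1) → α → 𝕜} (hf : ∀ j, Integrable (f j) μ) (t : α) :
    ∫ s in increasingBelow (r + 1) t, ∏ j, f j (s j) ∂(Measure.pi fun _ => μ) =
      ∫ a in Iio t, f (Fin.last r) a * ∫ y in increasingBelow r a,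
        ∏ j : Fin r, f j.castSucc (y j) ∂(Measure.pi fun _ => μ) ∂μ := by
  classical
  have hmeas := measurableSet_increasingBelow (r := r + 1) t
  rw [← integral_indicator hmeas,
    integral_pi_fin_succ ((Integrable.fintype_prod hf).indicator hmeas),
    ← integral_indicator measurableSet_Iio]
  refine integral_congr_ae (.of_forall fun a => ?_)
  by_cases ha : a < t
  · rw [indicator_of_mem (mem_Iio.2 ha), ← integral_const_mul,
      ← integral_indicator (measurableSet_increasingBelow a)]
    simp only [indicator_apply, snoc_mem_increasingBelow_iff, ha, true_and, Fin.prod_univ_castSucc,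
      Fin.snoc_castSucc, Fin.snoc_last, mul_comm]
  · simp only [indicator, snoc_mem_increasingBelow_iff, mem_Iio, ha, false_and, if_false,
      integral_zero]

end Simplex

section UniformMeasure

/-- The uniform distribution on the unit interval. -/
noncomputable abbrev unitUniform : Measure ℝ := volume.restrict (Ioo 0 1)

instance : IsProbabilityMeasure unitUniform := ⟨by simp⟩

lemma setIntegral_Iio_unitUniform {E : Type*} [NormedAddCommGroup E] [NormedSpace ℝ E]
    (f : ℝ → E) {t : ℝ} (ht : t ∈ Icc 0 1) :
    ∫ s in Iio t, f s ∂unitUniform = ∫ s in (0 : ℝ)..t, f s := by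
  have hinter : Iio t ∩ Ioo 0 1 = Ioo 0 t := by
    ext s
    simp only [mem_inter_iff, mem_Iio, mem_Ioo]
    grind
  rw [Measure.restrict_restrict measurableSet_Iio, hinter, intervalIntegral.integral_of_le ht.1,
    integral_Ioc_eq_integral_Ioo]

lemma integral_ite_lt_unitUniform (q : ℝ) {s : ℝ} (hs : s ∈ Ioo 0 1) :
    ∫ u, (if s < u then q else 1) ∂unitUniform = q + (1 - q) * s := by
  have hsplit (u : ℝ) :
      (if s < u then q else 1) = q + (1 - q) * (Iic s).indicator (fun _ => 1) u := by
    by_cases h : s < u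
    · simp only [h, if_true, indicator, mem_Iic, h.not_ge, if_false, mul_zero, add_zero]
    · simp only [h, if_false, indicator, mem_Iic, not_lt.1 h, if_true, mul_one, add_sub_cancel]
  have hinter : Iic s ∩ Ioo 0 1 = Ioc 0 s := by
    ext u
    simp only [mem_inter_iff, mem_Iic, mem_Ioo, mem_Ioc]
    grind
  have hreal : unitUniform.real (Iic s) = s := by
    rw [measureReal_restrict_apply measurableSet_Iic, hinter, Real.volume_real_Ioc_of_le hs.1.le,
      sub_zero]
  simp only [hsplit]
  rw [integral_add (integrable_const q)
    (((integrable_const (1 : ℝ)).indicator measurableSet_Iic).const_mul _), integral_const_mul,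
    integral_indicator_const _ measurableSet_Iic, hreal, integral_const, probReal_univ,
    one_smul, smul_eq_mul, mul_one]

theorem setIntegral_increasingBelow_eq_G (q : ℝ) : ∀ {r : ℕ} (m : Fin r → ℕ) {t : ℝ},
    t ∈ Icc 0 1 → (1 - q) ^ r * ∫ s in increasingBelow r t,
      ∏ j, (q + (1 - q) * s j) ^ m j ∂(Measure.pi fun _ => unitUniform) =
        G q (List.ofFn fun j => m j + 1).reverse (q + (1 - q) * t)
  | 0, _, _, _ => by simp [G, increasingBelow, Subsingleton.strictMono]
  | r + 1, m, t, ht => by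
    have hint (j : Fin (r + 1)) : Integrable (fun s => (q + (1 - q) * s) ^ m j) unitUniform :=
      ((by fun_prop : Continuous _).integrableOn_Icc).mono_set Ioo_subset_Icc_self
    let J := (List.ofFn fun j : Fin r => m j.castSucc + 1).reverse
    have hJ : (List.ofFn fun j => m j + 1).reverse = (m (Fin.last r) + 1) :: J := by
      simp only [J, List.ofFn_succ', List.concat_eq_append, List.reverse_append,
        List.reverse_singleton, List.singleton_append]
    have ih {s : ℝ} (hs : s ∈ uIcc 0 t) :=
      setIntegral_increasingBelow_eq_G q (fun j => m j.castSucc)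
        (Icc_subset_Icc_right ht.2 (uIcc_of_le ht.1 ▸ hs))
    rw [setIntegral_increasingBelow_succ hint, setIntegral_Iio_unitUniform _ ht, hJ, G]
    calc _ = (1 - q) * ∫ s in (0 : ℝ)..t,
          (q + (1 - q) * s) ^ m (Fin.last r) * G q J (q + (1 - q) * s) := by
          rw [pow_succ', mul_assoc, ← intervalIntegral.integral_const_mul]
          congr 1
          refine intervalIntegral.integral_congr fun s hs => ?_
          simp only [J, ← ih hs, mul_left_comm]
      _ = _ := by
          simpa only [smul_eq_mul, mul_zero, add_zero, Nat.add_sub_cancel] using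
            intervalIntegral.smul_integral_comp_add_mul (a := 0) (b := t)
              (fun u => u ^ m (Fin.last r) * G q J u) (1 - q) q

end UniformMeasure

section SinvWeight

variable {κ : Type*} [Fintype κ] {r : ℕ}

open Classical in
/-- The weight of an ordering `R` of the letter positions of a set of `r` lists: `Sum.inr` gives
the last positions of the blocks, `Sum.inl` the other positions, and `b` sends a nonlast position to
its block. The weight is `q ^ sinv`, or `0` when the last letters are not increasing. -/
noncomputable def sinvWeight {A : Type*} [CommSemiring A] (q : A) (b : κ → Fin r)
    (R : κ ⊕ Fin r → κ ⊕ Fin r → Prop) : A :=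
  if ∀ ⦃i j⦄, i < j → R (.inr i) (.inr j) then ∏ k, if R (.inr (b k)) (.inl k) then q else 1 else 0

lemma sinvWeight_orderPattern {A α : Type*} [CommSemiring A] [LinearOrder α] (q : A)
    (b : κ → Fin r) (x : κ ⊕ Fin r → α) :
    sinvWeight q b (orderPattern x) = {x : κ ⊕ Fin r → α | StrictMono (x ∘ Sum.inr)}.indicator
      (fun x => q ^ Finset.card {k | x (.inr (b k)) < x (.inl k)}) x := by
  classical
  simp only [sinvWeight, indicator_apply, Finset.prod_ite, Finset.prod_const, one_pow, mul_one]
  congr!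

lemma ae_forall_mem_Ioo_pi_unitUniform {ι : Type*} [Fintype ι] :
    ∀ᵐ s : ι → ℝ ∂(Measure.pi fun _ => unitUniform), ∀ j, s j ∈ Ioo 0 1 :=
  Filter.eventually_all.2 fun j => (Measure.tendsto_eval_ae_ae (i := j)).eventually
    (ae_restrict_mem measurableSet_Ioo)

lemma integral_sinvWeight_orderPattern_sumElim (q : ℝ) (b : κ → Fin r) {s : Fin r → ℝ}
    (hs : ∀ j, s j ∈ Ioo 0 1) :
    ∫ y, sinvWeight q b (orderPattern (Sum.elim y s)) ∂(Measure.pi fun _ => unitUniform) =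
      (increasingBelow r 1).indicator (fun s => ∏ k, (q + (1 - q) * s (b k))) s := by
  by_cases hmono : StrictMono s
  · have hmem : s ∈ increasingBelow r 1 := ⟨hmono, fun j => (hs j).2⟩
    have hweight (y : κ → ℝ) : sinvWeight q b (orderPattern (Sum.elim y s)) =
        ∏ k, if s (b k) < y k then q else 1 := if_pos hmono
    simp only [hweight, indicator_of_mem hmem]
    rw [integral_fintype_prod_eq_prod fun k u => if s (b k) < u then q else 1]
    exact Finset.prod_congr rfl fun k _ => integral_ite_lt_unitUniform q (hs (b k))
  · have hweight (y : κ → ℝ) : sinvWeight q b (orderPattern (Sum.elim y s)) = 0 := if_neg hmono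
    simp only [hweight, integral_zero, indicator_of_notMem fun h : s ∈ increasingBelow r 1 =>
      hmono h.1]

lemma integral_sinvWeight_orderPattern (q : ℝ) (b : κ → Fin r) :
    ∫ x, sinvWeight q b (orderPattern x) ∂(Measure.pi fun _ => unitUniform) =
      ∫ s in increasingBelow r 1, ∏ k, (q + (1 - q) * s (b k))
        ∂(Measure.pi fun _ => unitUniform) := by
  have hsplit := measurePreserving_sumPiEquivProdPi_symm fun _ : κ ⊕ Fin r => unitUniform
  have hint := hsplit.integrable_comp_of_integrable (integrable_comp_orderPattern (sinvWeight q b))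
  rw [← hsplit.integral_comp', ← integral_indicator (measurableSet_increasingBelow 1)]
  refine (integral_prod_symm _ hint).trans (integral_congr_ae ?_)
  exact ae_forall_mem_Ioo_pi_unitUniform.mono fun s hs =>
    integral_sinvWeight_orderPattern_sumElim q b hs

end SinvWeight

section Lists

variable {α : Type*} {k : ℕ}

lemma exists_ofFn_eq {l : List α} (hl : l.length = k) :
    ∃ f : Fin k → α, List.ofFn f = l := by
  subst hl
  exact ⟨l.get, List.ofFn_get l⟩

lemma exists_ofFn_append_singleton_eq {l : List α} (hl : l.length = k + 1) :
    ∃ (f : Fin k → α) (a : α), List.ofFn f ++ [a] = l := by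
  obtain ⟨f, rfl⟩ := exists_ofFn_eq hl
  exact ⟨fun i => f i.castSucc, f (Fin.last k), by rw [List.ofFn_succ', List.concat_eq_append]⟩

lemma exists_ofFn_add_one_eq {l : List ℕ} (hl : ∀ i ∈ l, 0 < i) :
    ∃ (k : ℕ) (f : Fin k → ℕ), List.ofFn (fun j => f j + 1) = l := by
  obtain ⟨f, hf⟩ := exists_ofFn_eq (l := l) rfl
  rw [← hf, List.forall_mem_ofFn_iff] at hl
  have hsub : (fun j => f j - 1 + 1) = f := funext fun j => Nat.sub_add_cancel (hl j)
  exact ⟨_, fun j => f j - 1, (congrArg List.ofFn hsub).trans hf⟩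

lemma countP_ofFn (p : α → Prop) [DecidablePred p] (f : Fin k → α) :
    (List.ofFn f).countP (fun a => p a) = Finset.card {i | p (f i)} := by
  rw [← Multiset.coe_countP, ← Fin.univ_val_map, Multiset.countP_map]
  rfl

end Lists

section Blocks

variable {α : Type*} {r n : ℕ} {m : Fin r → ℕ}

/-- The letter positions of a permutition whose blocks have sizes `m j + 1`: `Sum.inl ⟨j, k⟩` is the
`k`-th letter of the `j`-th block, and `Sum.inr j` is the last letter of that block. -/
abbrev Position (m : Fin r → ℕ) : Type := (Σ j, Fin (m j)) ⊕ Fin r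

lemma card_position : Fintype.card (Position m) = ∑ j, (m j + 1) := by
  simp only [Fintype.card_sum, Fintype.card_sigma, Fintype.card_fin, Finset.sum_add_distrib,
    Finset.sum_const, Finset.card_univ, smul_eq_mul, mul_one]

/-- The list of blocks whose letter at each position is given by `x`. -/
def blocks (x : Position m → α) : List (List α) :=
  List.ofFn fun j => List.ofFn (fun k => x (.inl ⟨j, k⟩)) ++ [x (.inr j)]

lemma map_length_blocks (x : Position m → α) :
    (blocks x).map List.length = List.ofFn fun j => m j + 1 := by
  simp [blocks, List.map_ofFn, Function.comp_def]

lemma blocks_injective : Function.Injective (blocks : (Position m → α) → List (List α)) := by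
  intro x y hxy
  have hblock (j : Fin r) := List.append_inj' (congrFun (List.ofFn_injective hxy) j) rfl
  funext p
  rcases p with ⟨j, k⟩ | j
  · exact congrFun (List.ofFn_injective (hblock j).1) k
  · exact List.singleton_injective (hblock j).2

lemma exists_blocks_eq {L : List (List α)}
    (hL : L.map List.length = List.ofFn fun j => m j + 1) : ∃ x : Position m → α, blocks x = L := by
  have hr : L.length = r := by simpa using congrArg List.length hL
  obtain ⟨B, rfl⟩ := exists_ofFn_eq hr
  rw [List.map_ofFn] at hL
  have hlen (j : Fin r) : (B j).length = m j + 1 := congrFun (List.ofFn_injective hL) j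
  choose f a hfa using fun j => exists_ofFn_append_singleton_eq (hlen j)
  exact ⟨Sum.elim (fun k => f k.1 k.2) a, congrArg List.ofFn (funext hfa)⟩

lemma mem_flatten_blocks_iff {x : Position m → α} {a : α} :
    a ∈ (blocks x).flatten ↔ a ∈ range x := by
  simp [blocks, List.mem_ofFn, Sum.exists, Sigma.exists, exists_or, eq_comm]

lemma nodup_flatten_blocks_iff {x : Position m → α} :
    (blocks x).flatten.Nodup ↔ x.Injective := by
  classical
  have hlen : (blocks x).flatten.length = Fintype.card (Position m) := by
    rw [List.length_flatten, map_length_blocks, List.sum_ofFn, card_position]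
  have hfinset : (blocks x).flatten.toFinset = Finset.univ.image x := by
    ext a
    simp [mem_flatten_blocks_iff, -List.mem_flatten]
  rw [← Multiset.coe_nodup, ← Multiset.toFinset_card_eq_card_iff_nodup]
  change (blocks x).flatten.toFinset.card = _ ↔ _
  rw [hfinset, Multiset.coe_card, hlen, ← Finset.card_univ, Finset.card_image_iff,
    Finset.coe_univ, injOn_univ]

lemma map_getLastD_blocks (x : Position m → α) (d : α) :
    ((blocks x).map fun B => B.getLastD d) = List.ofFn (x ∘ Sum.inr) := by
  simp [blocks, List.map_ofFn, Function.comp_def]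

lemma sinv_blocks (x : Position m → ℕ) :
    sinv (blocks x) = Finset.card {k : Σ j, Fin (m j) | x (.inr k.1) < x (.inl k)} := by
  have hblock (j : Fin r) :
      (List.ofFn (fun k => x (.inl ⟨j, k⟩)) ++ [x (.inr j)]).countP
          (fun a => decide (x (.inr j) < a)) =
        Finset.card {k : Fin (m j) | x (.inr j) < x (.inl ⟨j, k⟩)} := by
    rw [List.countP_append, List.countP_singleton, countP_ofFn (x (.inr j) < ·)]
    simp only [lt_self_iff_false, decide_false, Bool.false_eq_true, if_false, add_zero]
  simp only [sinv, blocks, List.map_ofFn, Function.comp_def, List.getLastD_concat, hblock,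
    List.sum_ofFn, Finset.card_filter, Fintype.sum_sigma]

lemma isPermutition_blocks_iff {x : Position m → ℕ} :
    IsPermutition n (blocks x) ↔
      x.Injective ∧ range x = Icc 1 n ∧ StrictMono (x ∘ Sum.inr) := by
  have hne : ∀ B ∈ blocks x, B ≠ [] := by simp [blocks, List.mem_ofFn]
  have hchain : List.IsChain (· < ·) ((blocks x).map fun B => B.getLastD 0) ↔
      StrictMono (x ∘ Sum.inr) := by
    rw [map_getLastD_blocks, List.isChain_iff_pairwise, List.pairwise_ofFn]
    rfl
  simp only [IsPermutition, mem_flatten_blocks_iff, nodup_flatten_blocks_iff, Set.ext_iff, mem_Icc]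
  exact ⟨fun h => ⟨h.2.1, h.2.2.1, hchain.1 h.2.2.2⟩, fun h => ⟨hne, h.1, h.2.1, hchain.2 h.2.2⟩⟩

lemma isPermutition_blocks_equiv_iff {e : Position m ≃ Fin n} :
    IsPermutition n (blocks fun p => e p + 1) ↔ StrictMono (e ∘ Sum.inr) := by
  have hinj : Function.Injective fun p => (e p : ℕ) + 1 :=
    (add_left_injective 1).comp (Fin.val_injective.comp e.injective)
  have hrange : range (fun p => (e p : ℕ) + 1) = Icc 1 n := by
    ext a
    refine ⟨?_, fun ha => ⟨e.symm ⟨a - 1, by grind⟩, ?_⟩⟩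
    · rintro ⟨p, rfl⟩
      exact ⟨Nat.le_add_left 1 _, (e p).isLt⟩
    · simpa only [Equiv.apply_symm_apply] using Nat.sub_add_cancel ha.1
  rw [isPermutition_blocks_iff]
  simp only [hinj, hrange, true_and, StrictMono, Function.comp_apply, add_lt_add_iff_right,
    Fin.val_fin_lt]

lemma exists_equiv_add_one_eq {ι : Type*} {x : ι → ℕ} (hinj : x.Injective)
    (hrange : range x = Icc 1 n) : ∃ e : ι ≃ Fin n, (fun p => (e p : ℕ) + 1) = x := by
  have hx (p : ι) : x p ∈ Icc 1 n := hrange ▸ mem_range_self p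
  let f (p : ι) : Fin n := ⟨x p - 1, by grind⟩
  have hf (p : ι) : (f p : ℕ) + 1 = x p := Nat.sub_add_cancel (hx p).1
  have hf_inj : f.Injective := fun p p' h => hinj (by rw [← hf p, ← hf p', h])
  have hf_surj : f.Surjective := fun i => by
    obtain ⟨p, hp⟩ : (i : ℕ) + 1 ∈ range x := hrange ▸ ⟨Nat.le_add_left 1 _, i.isLt⟩
    exact ⟨p, Fin.ext (Nat.add_right_cancel ((hf p).trans hp))⟩
  exact ⟨.ofBijective f ⟨hf_inj, hf_surj⟩, funext hf⟩

lemma bijOn_blocks :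
    BijOn (fun e : Position m ≃ Fin n => blocks fun p => (e p : ℕ) + 1)
      {e | StrictMono (e ∘ Sum.inr)}
      {L | IsPermutition n L ∧ shape L = List.ofFn fun j => m j + 1} := by
  refine ⟨fun e he => ⟨isPermutition_blocks_equiv_iff.2 he, map_length_blocks _⟩, ?_, ?_⟩
  · intro e _ e' _ h
    exact Equiv.ext fun p => Fin.ext (Nat.add_right_cancel (congrFun (blocks_injective h) p))
  · rintro L ⟨hL, hshape⟩
    obtain ⟨x, rfl⟩ := exists_blocks_eq hshape
    have hx := isPermutition_blocks_iff.1 hL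
    obtain ⟨e, rfl⟩ := exists_equiv_add_one_eq hx.1 hx.2.1
    exact ⟨e, isPermutition_blocks_equiv_iff.1 hL, rfl⟩

theorem finsum_permutition_eq_sum_sinvWeight {A : Type*} [CommSemiring A] (q : A) :
    ∑ᶠ L ∈ {L | IsPermutition n L ∧ shape L = List.ofFn fun j => m j + 1}, q ^ sinv L =
      ∑ e : Position m ≃ Fin n, sinvWeight q Sigma.fst (orderPattern e) := by
  rw [← finsum_mem_eq_of_bijOn _ bijOn_blocks fun e _ => rfl, finsum_mem_def,
    finsum_eq_sum_of_fintype]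
  refine Finset.sum_congr rfl fun e _ => ?_
  simp only [sinvWeight_orderPattern, sinv_blocks, indicator, add_lt_add_iff_right, Fin.val_fin_lt]
  rfl

theorem factorial_mul_g_eq_sum_sinvWeight (q : ℝ) (m : Fin r → ℕ) (hn : ∑ j, (m j + 1) = n) :
    n.factorial * g q (List.ofFn fun j => m j + 1) = (1 - q) ^ r *
      ∑ e : Position m ≃ Fin n, sinvWeight q Sigma.fst (orderPattern e) := by
  have hprod (s : Fin r → ℝ) :
      ∏ k : Σ j, Fin (m j), (q + (1 - q) * s k.1) = ∏ j, (q + (1 - q) * s j) ^ m j := by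
    simp only [Fintype.prod_sigma, Finset.prod_const, Finset.card_univ, Fintype.card_fin]
  have hG := setIntegral_increasingBelow_eq_G q m (right_mem_Icc.2 zero_le_one)
  rw [mul_one, add_sub_cancel] at hG
  rw [← factorial_smul_integral_comp_orderPattern (μ := unitUniform) _ (card_position.trans hn),
    integral_sinvWeight_orderPattern, g, ← hG, nsmul_eq_mul, mul_left_comm]
  simp only [hprod]

end Blocks

/-- for every composition `I` of `n` and real `q`,
`n! · g_I(q) = (1−q)^{ℓ(I)} · Σ_{c(π)=I} q^{sinv(π)}`. -/
theorem reduced_composition_polynomial_generating_function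
    (n : ℕ) (hn : 0 < n) (I : List ℕ) (hpos : ∀ i ∈ I, 0 < i) (hsum : I.sum = n) (q : ℝ) :
    (Nat.factorial n : ℝ) * g q I =
      (1 - q) ^ I.length *
        ∑ᶠ L ∈ {L : List (List ℕ) | IsPermutition n L ∧ shape L = I}, q ^ sinv L := by
  obtain ⟨r, m, rfl⟩ := exists_ofFn_add_one_eq hpos
  rw [List.sum_ofFn] at hsum
  rw [List.length_ofFn, finsum_permutition_eq_sum_sinvWeight,
    factorial_mul_g_eq_sum_sinvWeight q m hsum]
end

section
/- For every positive integer n and every real number q, Σ_I n! · g_I(q)/(1−q)^{ℓ(I)} = Σ_π q^{sinv(π)}, where the first sum ranges over all compositions I of n and the second over all permutitions π of size n. In particular, at q = 1, Σ_I P_I(1) equals the total number of permutitions of size n. -/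
/-!
The substitution `t = q + (1 - q) u` turns `g_I(q)` into `(1 - q) ^ ℓ(I)` times the integral over
`0 ≤ u_1 ≤ ⋯ ≤ u_r ≤ 1` of the product of the `(u_k + q (1 - u_k)) ^ (i_k - 1)`. Here
`u + q (1 - u)` is the mean weight of a uniform random letter of `[0, 1]` that weighs `1` below `u`
and `q` above it. Viewing `u_k` as the last letter of the `k`-th block and the other `i_k - 1`
letters of that block as independent and uniform, the integral is `1 / n!` times the sum of
`q ^ sinv π` over the permutitions `π` of shape `I`. So `P_I(q)` is this sum, and adding up over `I`
gives the theorem.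

A discrete form of this argument works with coefficients in the basis
`u ^ a / a! · (1 - u) ^ b / b!`: they are weighted counts of arrangements of `a` letters below and
`b` letters above a threshold, and both multiplication by `u + q (1 - u)` and integration act by
inserting one letter.
-/

section LetterSteps

variable {R : Type*} [CommSemiring R]

/-- The effect on `q`-counts of arrangements of inserting a letter that is not last in its block:
it is one of the `a` letters below the last letter of its block, or one of the `b` letters above it,
which gives a factor `q`. -/
def nonLastStep (q : R) (f : ℕ → ℕ → R) (a b : ℕ) : R :=
  a * f (a - 1) b + q * (b * f a (b - 1))

/-- The effect on counts of arrangements of inserting the last letter of a block, to be chosen among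
the `a` smallest of `a + b` letters: if it is larger than exactly `j` of them, it becomes the new
threshold, with `j` letters below and `a + b - 1 - j` above. -/
def lastStep (f : ℕ → ℕ → R) (a b : ℕ) : R :=
  ∑ j ∈ Finset.range a, f j (a + b - 1 - j)

theorem lastStep_succ (f : ℕ → ℕ → R) (a b : ℕ) :
    lastStep f (a + 1) b = lastStep f a (b + 1) + f a b := by
  simp only [lastStep, Finset.sum_range_succ]
  congr 2
  · funext j
    congr 1
    omega
  · omega

/-- The sum of `q ^ sinv` over the arrangements of `a + b` letters into a sequence of blocks whose
sizes are given by the list read backwards (as for `G`), whose last letters increase, and all of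
whose last letters are among the `a` smallest letters. Sizes are meant to be positive and to add up
to `a + b`. -/
def arrangementSum (q : R) : List ℕ → ℕ → ℕ → R
  | [], _, _ => 1
  | i :: J, a, b => lastStep ((nonLastStep q)^[i - 1] (arrangementSum q J)) a b

end LetterSteps

section BernsteinForm

open Finset Polynomial
open scoped Nat

variable {K : Type*} [Field K]

/-- The divided power `p ^ k / k!`. -/
noncomputable def dividedPow (k : ℕ) (p : K[X]) : K[X] := C (k ! : K)⁻¹ * p ^ k

/-- The polynomial `∑_{a + b = n} f a b · (X ^ a / a!) · ((1 - X) ^ b / b!)`, that is, `1 / n!`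
times the Bernstein form with coefficients `f a b`. -/
noncomputable def bernsteinSum (n : ℕ) (f : ℕ → ℕ → K) : K[X] :=
  ∑ p ∈ antidiagonal n, C (f p.1 p.2) * (dividedPow p.1 X * dividedPow p.2 (1 - X))

@[simp]
theorem dividedPow_zero (p : K[X]) : dividedPow 0 p = 1 := by
  simp [dividedPow]

theorem bernsteinSum_zero (f : ℕ → ℕ → K) : bernsteinSum 0 f = C (f 0 0) := by
  simp [bernsteinSum]

theorem eval_zero_bernsteinSum (n : ℕ) (f : ℕ → ℕ → K) :
    (bernsteinSum n f).eval 0 = f 0 n / n ! := by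
  cases n with
  | zero => simp [bernsteinSum_zero]
  | succ n =>
    simp [bernsteinSum, Nat.sum_antidiagonal_succ, eval_finsetSum, dividedPow, div_eq_mul_inv]

theorem eval_one_bernsteinSum (n : ℕ) (f : ℕ → ℕ → K) :
    (bernsteinSum n f).eval 1 = f n 0 / n ! := by
  cases n with
  | zero => simp [bernsteinSum_zero]
  | succ n =>
    simp [bernsteinSum, Nat.sum_antidiagonal_succ', eval_finsetSum, dividedPow, div_eq_mul_inv]

variable [CharZero K]

theorem inv_factorial_succ_mul (k : ℕ) : ((k + 1) ! : K)⁻¹ * (k + 1) = (k ! : K)⁻¹ := by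
  rw [Nat.factorial_succ]
  push_cast
  field_simp

theorem mul_dividedPow (k : ℕ) (p : K[X]) :
    p * dividedPow k p = C (k + 1 : K) * dividedPow (k + 1) p := by
  rw [dividedPow, dividedPow, ← inv_factorial_succ_mul, C_mul]
  ring

theorem derivative_dividedPow_succ (k : ℕ) (p : K[X]) :
    derivative (dividedPow (k + 1) p) = dividedPow k p * derivative p := by
  rw [dividedPow, dividedPow, derivative_C_mul, derivative_pow_succ, ← inv_factorial_succ_mul k,
    C_mul]
  ring

theorem bernsteinSum_nonLastStep (q : K) (n : ℕ) (f : ℕ → ℕ → K) :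
    bernsteinSum (n + 1) (nonLastStep q f) = (X + C q * (1 - X)) * bernsteinSum n f := by
  have hbelow : ∑ p ∈ antidiagonal (n + 1),
      C (p.1 * f (p.1 - 1) p.2) * (dividedPow p.1 X * dividedPow p.2 (1 - X)) =
        X * bernsteinSum n f := by
    rw [Nat.sum_antidiagonal_succ, bernsteinSum, mul_sum]
    simp only [Nat.cast_zero, zero_mul, C_0, zero_add, add_tsub_cancel_right, Nat.cast_succ, C_mul]
    refine sum_congr rfl fun p _ => ?_
    linear_combination -(C (f p.1 p.2) * dividedPow p.2 (1 - X)) * mul_dividedPow p.1 (X : K[X])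
  have habove : ∑ p ∈ antidiagonal (n + 1),
      C (p.2 * f p.1 (p.2 - 1)) * (dividedPow p.1 X * dividedPow p.2 (1 - X)) =
        (1 - X) * bernsteinSum n f := by
    rw [Nat.sum_antidiagonal_succ', bernsteinSum, mul_sum]
    simp only [Nat.cast_zero, zero_mul, C_0, zero_add, add_tsub_cancel_right, Nat.cast_succ, C_mul]
    refine sum_congr rfl fun p _ => ?_
    linear_combination -(C (f p.1 p.2) * dividedPow p.1 X) * mul_dividedPow p.2 (1 - X : K[X])
  rw [add_mul, mul_assoc, ← hbelow, ← habove, mul_sum, ← sum_add_distrib, bernsteinSum]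
  refine sum_congr rfl fun p _ => ?_
  rw [nonLastStep, C_add, C_mul (a := q)]
  ring

theorem bernsteinSum_nonLastStep_iterate (q : K) (n : ℕ) (f : ℕ → ℕ → K) (k : ℕ) :
    bernsteinSum (n + k) ((nonLastStep q)^[k] f) =
      (X + C q * (1 - X)) ^ k * bernsteinSum n f := by
  induction k with
  | zero => simp
  | succ k ih =>
    rw [Function.iterate_succ_apply', ← add_assoc, bernsteinSum_nonLastStep, ih, pow_succ',
      mul_assoc]

theorem derivative_bernsteinSum_succ (n : ℕ) (f : ℕ → ℕ → K) :
    derivative (bernsteinSum (n + 1) f) =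
      bernsteinSum n fun a b => f (a + 1) b - f a (b + 1) := by
  have hfst : ∑ p ∈ antidiagonal (n + 1),
      C (f p.1 p.2) * (derivative (dividedPow p.1 X) * dividedPow p.2 (1 - X)) =
        bernsteinSum n fun a b => f (a + 1) b := by
    simp [Nat.sum_antidiagonal_succ, derivative_dividedPow_succ, bernsteinSum]
  have hsnd : ∑ p ∈ antidiagonal (n + 1),
      C (f p.1 p.2) * (dividedPow p.1 X * derivative (dividedPow p.2 (1 - X))) =
        -bernsteinSum n fun a b => f a (b + 1) := by
    simp [Nat.sum_antidiagonal_succ', derivative_dividedPow_succ, bernsteinSum]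
  rw [bernsteinSum, derivative_sum]
  simp_rw [derivative_C_mul, derivative_mul, mul_add]
  rw [sum_add_distrib, hfst, hsnd, ← sub_eq_add_neg]
  simp only [bernsteinSum, C_sub, sub_mul, sum_sub_distrib]

theorem derivative_bernsteinSum_lastStep (n : ℕ) (f : ℕ → ℕ → K) :
    derivative (bernsteinSum (n + 1) (lastStep f)) = bernsteinSum n f := by
  simp only [derivative_bernsteinSum_succ, lastStep_succ, add_sub_cancel_left]

end BernsteinForm

section IteratedIntegral

open Polynomial

theorem G_cons_segment (q : ℝ) (i : ℕ) (J : List ℕ) (u : ℝ) :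
    G q (i :: J) (q + (1 - q) * u) =
      (1 - q) * ∫ v in (0 : ℝ)..u, (v + q * (1 - v)) ^ (i - 1) * G q J (q + (1 - q) * v) := by
  have hsub := intervalIntegral.smul_integral_comp_add_mul (a := (0 : ℝ)) (b := u)
    (fun s => s ^ (i - 1) * G q J s) (1 - q) q
  rw [mul_zero, add_zero, smul_eq_mul] at hsub
  rw [G, ← hsub]
  congr 1
  refine intervalIntegral.integral_congr fun v _ => ?_
  congr 2
  ring

theorem integral_eval_bernsteinSum (n : ℕ) (f : ℕ → ℕ → ℝ) (u : ℝ) :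
    ∫ v in (0 : ℝ)..u, (bernsteinSum n f).eval v =
      (bernsteinSum (n + 1) (lastStep f)).eval u := by
  rw [← derivative_bernsteinSum_lastStep, intervalIntegral.integral_eq_sub_of_hasDerivAt
    (fun v _ => Polynomial.hasDerivAt _ v) ((Polynomial.continuous _).intervalIntegrable _ _),
    eval_zero_bernsteinSum]
  simp [lastStep]

theorem G_segment (q : ℝ) {J : List ℕ} (hJ : ∀ i ∈ J, 0 < i) (u : ℝ) :
    G q J (q + (1 - q) * u) =
      (1 - q) ^ J.length * (bernsteinSum J.sum (arrangementSum q J)).eval u := by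
  induction J generalizing u with
  | nil => simp [G, bernsteinSum_zero, arrangementSum]
  | cons i J ih =>
    obtain ⟨hi, hJ⟩ := List.forall_mem_cons.1 hJ
    have hsum : (i :: J).sum = J.sum + (i - 1) + 1 := by rw [List.sum_cons]; omega
    have hlast : arrangementSum q (i :: J) =
        lastStep ((nonLastStep q)^[i - 1] (arrangementSum q J)) := rfl
    rw [G_cons_segment, hsum, hlast, ← integral_eval_bernsteinSum,
      bernsteinSum_nonLastStep_iterate, List.length_cons, pow_succ', mul_assoc,
      ← intervalIntegral.integral_const_mul ((1 - q) ^ J.length)]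
    congr 1
    refine intervalIntegral.integral_congr fun v _ => ?_
    simp only [ih hJ, eval_mul, eval_pow, eval_add, eval_sub, eval_X, eval_C, eval_one]
    ring

theorem g_eq_arrangementSum (q : ℝ) {I : List ℕ} (hI : ∀ i ∈ I, 0 < i) :
    g q I = (1 - q) ^ I.length * (arrangementSum q I.reverse I.sum 0 / I.sum.factorial) := by
  have h := G_segment q (J := I.reverse) (by simpa using hI) 1
  rwa [mul_one, add_sub_cancel, eval_one_bernsteinSum, List.length_reverse, List.sum_reverse] at h

end IteratedIntegral

section Words

open Finset

/-- The words using each letter of `T` exactly once. -/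
def words {α : Type*} (T : Finset α) : Finset (List α) :=
  ⟨T.val.lists, Multiset.lists_nodup_finset T⟩

variable {α : Type*}

theorem mem_words {T : Finset α} {w : List α} : w ∈ words T ↔ T.val = w :=
  Multiset.mem_lists_iff _ _

theorem length_of_mem_words {T : Finset α} {w : List α} (hw : w ∈ words T) : w.length = #T := by
  rw [card_def, mem_words.1 hw, Multiset.coe_card]

theorem mem_words_iff_nodup {T : Finset α} {w : List α} :
    w ∈ words T ↔ w.Nodup ∧ ∀ x, x ∈ w ↔ x ∈ T := by
  rw [mem_words]
  constructor
  · intro h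
    exact ⟨Multiset.coe_nodup.1 (h ▸ T.nodup), fun x => by rw [← mem_val, h, Multiset.mem_coe]⟩
  · rintro ⟨hw, hmem⟩
    exact (T.nodup.ext (Multiset.coe_nodup.2 hw)).2 fun x => (hmem x).symm

theorem words_empty : words (∅ : Finset α) = {[]} := by
  ext w
  rw [mem_words, empty_val, mem_singleton, eq_comm, Multiset.coe_eq_zero]

variable [DecidableEq α]

theorem concat_mem_words {T : Finset α} {w : List α} {x : α} :
    w ++ [x] ∈ words T ↔ x ∈ T ∧ w ∈ words (T.erase x) := by
  have hcoe : ((w ++ [x] : List α) : Multiset α) = x ::ₘ w := by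
    rw [← Multiset.coe_add, Multiset.coe_singleton, add_comm, Multiset.singleton_add]
  rw [mem_words, mem_words, erase_val, hcoe]
  constructor
  · intro h
    exact ⟨by rw [← mem_val, h]; exact Multiset.mem_cons_self x _,
      by rw [h, Multiset.erase_cons_head]⟩
  · rintro ⟨hx, h⟩
    rw [← h, Multiset.cons_erase hx]

theorem sum_words_eq_sum_concat {M : Type*} [AddCommMonoid M] (f : List α → M) {T : Finset α}
    (hT : T.Nonempty) :
    ∑ w ∈ words T, f w = ∑ x ∈ T, ∑ w ∈ words (T.erase x), f (w ++ [x]) := by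
  rw [sum_sigma']
  symm
  refine sum_bij (fun p _ => p.2 ++ [p.1]) (fun p hp => concat_mem_words.2 (mem_sigma.1 hp)) ?_ ?_
    fun _ _ => rfl
  · rintro ⟨x, w⟩ _ ⟨y, v⟩ _ h
    obtain ⟨rfl, rfl⟩ := List.append_singleton_inj.1 h
    rfl
  · intro w hw
    have hne : w ≠ [] := by
      rw [← List.length_pos_iff, length_of_mem_words hw]
      exact hT.card_pos
    rw [← List.dropLast_concat_getLast hne] at hw ⊢
    exact ⟨⟨_, _⟩, mem_sigma.2 (concat_mem_words.1 hw), rfl⟩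

end Words

section Ranks

open Finset

variable {α : Type*} [LinearOrder α]

theorem card_filter_lt_add_card_filter_gt {T : Finset α} {m : α} (hm : m ∉ T) :
    #{x ∈ T | x < m} + #{x ∈ T | m < x} = #T := by
  rw [← card_filter_add_card_filter_not (s := T) (· < m)]
  congr 2
  refine filter_congr fun x hx => ?_
  rw [not_lt, lt_iff_le_and_ne, and_iff_left]
  rintro rfl
  exact hm hx

theorem sum_card_filter_lt {M : Type*} [AddCommMonoid M] (f : ℕ → M) (T : Finset α) :
    ∑ m ∈ T, f #{x ∈ T | x < m} = ∑ j ∈ range #T, f j := by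
  induction T using Finset.induction_on_max with
  | empty => simp
  | insert a T ha ih =>
    have haT : a ∉ T := fun h => lt_irrefl a (ha a h)
    rw [sum_insert haT, card_insert_of_notMem haT, sum_range_succ, add_comm, ← ih]
    congr 1
    · refine sum_congr rfl fun m hm => ?_
      rw [filter_insert, if_neg (ha m hm).not_gt]
    · rw [filter_insert, if_neg (lt_irrefl a), filter_true_of_mem ha]

theorem sum_filter_lt_eq_lastStep {R : Type*} [CommSemiring R] (f : ℕ → ℕ → R) {T : Finset α}
    {c : α} (hc : c ∉ T) :
    ∑ m ∈ T with m < c, f #{x ∈ T.erase m | x < m} #{x ∈ T.erase m | m < x} =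
      lastStep f #{x ∈ T | x < c} #{x ∈ T | c < x} := by
  rw [lastStep, card_filter_lt_add_card_filter_gt hc, ← sum_card_filter_lt]
  refine sum_congr rfl fun m hm => ?_
  obtain ⟨hmT, hmc⟩ := mem_filter.1 hm
  have hbelow : {x ∈ T.erase m | x < m} = {x ∈ {x ∈ T | x < c} | x < m} := by
    ext x
    simp only [mem_filter, mem_erase]
    exact ⟨fun h => ⟨⟨h.1.2, h.2.trans hmc⟩, h.2⟩, fun h => ⟨⟨h.2.ne, h.1.1⟩, h.2⟩⟩
  have hcard := card_filter_lt_add_card_filter_gt (notMem_erase m T)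
  rw [card_erase_of_mem hmT, hbelow] at hcard
  rw [hbelow, ← hcard, add_tsub_cancel_left]

theorem sum_erase_eq_nonLastStep {R : Type*} [CommSemiring R] (q : R) (f : ℕ → ℕ → R)
    {T : Finset α} {m : α} (hm : m ∉ T) :
    ∑ y ∈ T, (if m < y then q else 1) * f #{x ∈ T.erase y | x < m} #{x ∈ T.erase y | m < x} =
      nonLastStep q f #{x ∈ T | x < m} #{x ∈ T | m < x} := by
  have hbelow : ∀ y ∈ {y ∈ T | ¬ m < y}, (if m < y then q else 1) *
      f #{x ∈ T.erase y | x < m} #{x ∈ T.erase y | m < x} =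
        f (#{x ∈ T | x < m} - 1) #{x ∈ T | m < x} := by
    intro y hy
    obtain ⟨hyT, hym⟩ := mem_filter.1 hy
    have hlt : y < m := (not_lt.1 hym).lt_of_ne fun h => hm (h ▸ hyT)
    rw [if_neg hym, one_mul, filter_erase, filter_erase,
      card_erase_of_mem (mem_filter.2 ⟨hyT, hlt⟩),
      erase_eq_of_notMem fun h => hym (mem_filter.1 h).2]
  have habove : ∀ y ∈ {y ∈ T | m < y}, (if m < y then q else 1) *
      f #{x ∈ T.erase y | x < m} #{x ∈ T.erase y | m < x} =
        q * f #{x ∈ T | x < m} (#{x ∈ T | m < x} - 1) := by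
    intro y hy
    obtain ⟨hyT, hmy⟩ := mem_filter.1 hy
    rw [if_pos hmy, filter_erase, filter_erase, card_erase_of_mem (mem_filter.2 ⟨hyT, hmy⟩),
      erase_eq_of_notMem (s := {x ∈ T | x < m}) fun h => hmy.not_gt (mem_filter.1 h).2]
  have hcard : #{y ∈ T | ¬ m < y} = #{x ∈ T | x < m} := by
    have h := card_filter_add_card_filter_not (s := T) (m < ·)
    rw [← card_filter_lt_add_card_filter_gt hm] at h
    omega
  rw [← sum_filter_add_sum_filter_not T (m < ·), sum_congr rfl hbelow, sum_congr rfl habove,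
    sum_const, sum_const, hcard, nsmul_eq_mul, nsmul_eq_mul, nonLastStep]
  ring

end Ranks

section ArrangementSums

open Finset

variable {R : Type*} [CommSemiring R]

-- Strips off the `k` letters that precede the last letter `m` of the final block.
theorem sum_words_pow_countP_drop {α : Type*} [LinearOrder α] (q : R) {m : α} {N : ℕ}
    {h : List α → R} {f : ℕ → ℕ → R}
    (hf : ∀ T : Finset α, m ∉ T → #T = N →
      ∑ w ∈ words T, h w = f #{x ∈ T | x < m} #{x ∈ T | m < x})
    (k : ℕ) {T : Finset α} (hm : m ∉ T) (hT : #T = N + k) :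
    ∑ w ∈ words T, q ^ (w.drop N).countP (m < ·) * h (w.take N) =
      (nonLastStep q)^[k] f #{x ∈ T | x < m} #{x ∈ T | m < x} := by
  induction k generalizing T with
  | zero =>
    rw [Function.iterate_zero_apply, ← hf T hm hT]
    refine sum_congr rfl fun w hw => ?_
    have hlen : w.length ≤ N := by rw [length_of_mem_words hw, hT, add_zero]
    rw [List.drop_of_length_le hlen, List.take_of_length_le hlen, List.countP_nil, pow_zero,
      one_mul]
  | succ k ih =>
    rw [sum_words_eq_sum_concat _ (card_pos.1 (by omega)), Function.iterate_succ_apply',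
      ← sum_erase_eq_nonLastStep q _ hm]
    refine sum_congr rfl fun y hy => ?_
    have hcard : #(T.erase y) = N + k := by rw [card_erase_of_mem hy]; omega
    rw [← ih (fun hmy => hm (mem_of_mem_erase hmy)) hcard, mul_sum]
    refine sum_congr rfl fun w hw => ?_
    have hlen : N ≤ w.length := by rw [length_of_mem_words hw]; omega
    rw [List.drop_append_of_le_length hlen, List.take_append_of_le_length hlen,
      List.countP_append, List.countP_singleton, pow_add]
    simp only [decide_eq_true_eq]
    split_ifs <;> ring

/-- `q ^ sinv L` if the last letters of the blocks of `L` increase and stay below `c`, and `0`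
otherwise. -/
def weightBelow (q : R) (c : ℕ) (L : List (List ℕ)) : R :=
  if (L.map (·.getLastD 0) ++ [c]).IsChain (· < ·) then q ^ sinv L else 0

theorem weightBelow_nil (q : R) (c : ℕ) : weightBelow q c [] = 1 := by
  simp [weightBelow, sinv]

theorem sinv_append_concat (L : List (List ℕ)) (B : List ℕ) (m : ℕ) :
    sinv (L ++ [B ++ [m]]) = B.countP (m < ·) + sinv L := by
  simp [sinv, add_comm]

theorem weightBelow_append_concat (q : R) (c : ℕ) (L : List (List ℕ)) (B : List ℕ) (m : ℕ) :
    weightBelow q c (L ++ [B ++ [m]]) =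
      if m < c then q ^ B.countP (m < ·) * weightBelow q m L else 0 := by
  have hchain : ((L ++ [B ++ [m]]).map (·.getLastD 0) ++ [c]).IsChain (· < ·) ↔
      (L.map (·.getLastD 0) ++ [m]).IsChain (· < ·) ∧ m < c := by
    rw [List.map_append, List.map_singleton, List.getLastD_concat, List.append_assoc,
      List.singleton_append, List.isChain_append_cons_cons]
    simp
  simp only [weightBelow, hchain, sinv_append_concat, pow_add]
  by_cases hmc : m < c <;> simp [hmc]

theorem splitLengths_concat {α : Type*} {I : List ℕ} {v u : List α} (hv : v.length = I.sum) :
    (I ++ [u.length]).splitLengths (v ++ u) = I.splitLengths v ++ [u] := by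
  rw [List.eq_iff_flatten_eq]
  constructor
  · rw [List.flatten_splitLengths _ _ (by simp [hv]), List.flatten_append,
      List.flatten_splitLengths _ _ hv.le, List.flatten_singleton]
  · rw [List.map_splitLengths_length _ _ (by simp [hv]), List.map_append,
      List.map_splitLengths_length _ _ hv.ge, List.map_singleton]

theorem sum_words_weightBelow (q : R) {I : List ℕ} (hI : ∀ i ∈ I, 0 < i) {T : Finset ℕ} {c : ℕ}
    (hc : c ∉ T) (hT : #T = I.sum) :
    ∑ w ∈ words T, weightBelow q c (I.splitLengths w) =
      arrangementSum q I.reverse #{x ∈ T | x < c} #{x ∈ T | c < x} := by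
  induction I using List.reverseRecOn generalizing T c with
  | nil =>
    obtain rfl : T = ∅ := card_eq_zero.1 hT
    simp [words_empty, arrangementSum, weightBelow_nil]
  | append_singleton I i ih =>
    obtain ⟨hI, hi⟩ : (∀ j ∈ I, 0 < j) ∧ 0 < i := by simpa [or_imp, forall_and] using hI
    rw [List.sum_append, List.sum_singleton] at hT
    rw [List.reverse_concat, arrangementSum, ← sum_filter_lt_eq_lastStep _ hc, sum_filter,
      sum_words_eq_sum_concat _ (card_pos.1 (by omega))]
    refine sum_congr rfl fun m hm => ?_
    have hcard : #(T.erase m) = I.sum + (i - 1) := by rw [card_erase_of_mem hm]; omega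
    rw [← sum_words_pow_countP_drop q (fun U hU hUcard => ih hI hU hUcard) (i - 1)
      (notMem_erase m T) hcard, ite_sum_zero]
    refine sum_congr rfl fun w hw => ?_
    have hlen : w.length = I.sum + (i - 1) := (length_of_mem_words hw).trans hcard
    rw [← weightBelow_append_concat, ← splitLengths_concat (by simp [hlen])]
    congr 2
    · rw [List.length_append, List.length_drop, hlen, List.length_singleton, add_tsub_cancel_left,
        Nat.sub_add_cancel hi]
    · rw [← List.append_assoc, List.take_append_drop]

end ArrangementSums

section Permutitions

open Finset

theorem finite_setOf_compositions (n : ℕ) : {I : List ℕ | (∀ i ∈ I, 0 < i) ∧ I.sum = n}.Finite :=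
  (Set.finite_range (Composition.blocks (n := n))).subset fun I hI =>
    ⟨⟨I, fun {i} => hI.1 i, hI.2⟩, rfl⟩

theorem isPermutition_iff {n : ℕ} {L : List (List ℕ)} :
    IsPermutition n L ↔ (∀ i ∈ shape L, 0 < i) ∧ L.flatten ∈ words (Icc 1 n) ∧
      (L.map (·.getLastD 0) ++ [n + 1]).IsChain (· < ·) := by
  have hshape : (∀ i ∈ shape L, 0 < i) ↔ ∀ B ∈ L, B ≠ [] := by
    simp [shape, List.length_pos_iff]
  have hlast (hmem : ∀ x, x ∈ L.flatten ↔ 1 ≤ x ∧ x ≤ n) (B : List ℕ) (hB : B ∈ L) :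
      B.getLastD 0 < n + 1 := by
    rcases B.eq_nil_or_concat with rfl | ⟨A, x, rfl⟩
    · simp
    · have hx : x ∈ L.flatten := List.mem_flatten_of_mem hB (by simp)
      rw [List.concat_eq_append, List.getLastD_concat]
      exact Nat.lt_succ_of_le ((hmem x).1 hx).2
  have hchain (hmem : ∀ x, x ∈ L.flatten ↔ 1 ≤ x ∧ x ≤ n) :
      (L.map (·.getLastD 0) ++ [n + 1]).IsChain (· < ·) ↔
        (L.map (·.getLastD 0)).IsChain (· < ·) := by
    rw [List.isChain_append]
    refine and_iff_left_of_imp fun _ => ⟨List.isChain_singleton _, fun x hx y hy => ?_⟩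
    obtain ⟨B, hB, rfl⟩ := List.mem_map.1 (List.mem_of_mem_getLast? hx)
    obtain rfl : n + 1 = y := by simpa using hy
    exact hlast hmem B hB
  rw [IsPermutition, hshape, mem_words_iff_nodup, and_assoc]
  simp only [mem_Icc]
  exact and_congr_right fun _ => and_congr_right fun _ => and_congr_right fun hmem =>
    (hchain hmem).symm

theorem IsPermutition.shape_mem {n : ℕ} {L : List (List ℕ)} (hL : IsPermutition n L) :
    shape L ∈ {I : List ℕ | (∀ i ∈ I, 0 < i) ∧ I.sum = n} := by
  obtain ⟨hpos, hwords, -⟩ := isPermutition_iff.1 hL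
  refine ⟨hpos, ?_⟩
  rw [shape, ← List.length_flatten, length_of_mem_words hwords, Nat.card_Icc, add_tsub_cancel_right]

theorem finite_setOf_isPermutition (n : ℕ) : {L | IsPermutition n L}.Finite :=
  Set.Finite.of_injOn
    (t := (words (Icc 1 n) : Set (List ℕ)) ×ˢ {I | (∀ i ∈ I, 0 < i) ∧ I.sum = n})
    (fun _ hL => ⟨(isPermutition_iff.1 hL).2.1, IsPermutition.shape_mem hL⟩)
    (fun _ _ _ _ h => List.eq_iff_flatten_eq.2 (Prod.mk.inj h))
    ((words (Icc 1 n)).finite_toSet.prod (finite_setOf_compositions n))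

/-- The permutitions of size `n`, as a finite set. -/
noncomputable def permutitions (n : ℕ) : Finset (List (List ℕ)) :=
  (finite_setOf_isPermutition n).toFinset

theorem mem_permutitions {n : ℕ} {L : List (List ℕ)} : L ∈ permutitions n ↔ IsPermutition n L :=
  Set.Finite.mem_toFinset _

/-- The reduced composition polynomial `P_I(q) = n! g_I(q) / (1 - q) ^ ℓ(I)`, encoded through its
combinatorial expansion over the permutitions of shape `I`, where `n = I.sum`. -/
noncomputable def reducedPolynomial (I : List ℕ) : Polynomial ℝ :=
  ∑ L ∈ permutitions I.sum with shape L = I, Polynomial.X ^ sinv L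

theorem eval_reducedPolynomial (q : ℝ) (I : List ℕ) :
    (reducedPolynomial I).eval q =
      ∑ L ∈ permutitions I.sum with shape L = I, q ^ sinv L := by
  simp [reducedPolynomial, Polynomial.eval_finsetSum]

theorem sum_words_weightBelow_eq_sum_permutitions {R : Type*} [CommSemiring R] (q : R)
    {I : List ℕ} (hI : ∀ i ∈ I, 0 < i) :
    ∑ w ∈ words (Icc 1 I.sum), weightBelow q (I.sum + 1) (I.splitLengths w) =
      ∑ L ∈ permutitions I.sum with shape L = I, q ^ sinv L := by
  have hlen {w : List ℕ} (hw : w ∈ words (Icc 1 I.sum)) : w.length = I.sum := by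
    rw [length_of_mem_words hw, Nat.card_Icc, add_tsub_cancel_right]
  have hshape {w : List ℕ} (hw : w ∈ words (Icc 1 I.sum)) : shape (I.splitLengths w) = I :=
    List.map_splitLengths_length _ _ (hlen hw).ge
  have hflatten {w : List ℕ} (hw : w ∈ words (Icc 1 I.sum)) : (I.splitLengths w).flatten = w :=
    List.flatten_splitLengths _ _ (hlen hw).le
  simp only [weightBelow]
  rw [← sum_filter]
  refine sum_nbij' I.splitLengths List.flatten ?_ ?_ (fun w hw => hflatten (mem_filter.1 hw).1) ?_
    fun _ _ => rfl
  · intro w hw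
    obtain ⟨hw, hchain⟩ := mem_filter.1 hw
    simp only [mem_filter, mem_permutitions, isPermutition_iff, hshape hw,
      hflatten hw]
    exact ⟨⟨hI, hw, hchain⟩, trivial⟩
  all_goals
    intro L hL
    obtain ⟨hL, hLI⟩ := mem_filter.1 hL
    obtain ⟨-, hwords, hchain⟩ := isPermutition_iff.1 (mem_permutitions.1 hL)
    have hsplit : I.splitLengths L.flatten = L :=
      List.eq_iff_flatten_eq.2 ⟨hflatten hwords, (hshape hwords).trans hLI.symm⟩
  · exact mem_filter.2 ⟨hwords, by rwa [hsplit]⟩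
  · exact hsplit

theorem factorial_mul_g (q : ℝ) {I : List ℕ} (hI : ∀ i ∈ I, 0 < i) :
    (I.sum.factorial : ℝ) * g q I = (1 - q) ^ I.length * (reducedPolynomial I).eval q := by
  have hbelow : #{x ∈ Icc 1 I.sum | x < I.sum + 1} = I.sum := by
    rw [filter_true_of_mem fun x hx => Nat.lt_succ_of_le (mem_Icc.1 hx).2, Nat.card_Icc,
      add_tsub_cancel_right]
  have habove : #{x ∈ Icc 1 I.sum | I.sum + 1 < x} = 0 := by
    rw [filter_false_of_mem fun x hx => ((mem_Icc.1 hx).2.trans (Nat.le_succ _)).not_gt, card_empty]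
  have hcount := sum_words_weightBelow q hI (T := Icc 1 I.sum) (c := I.sum + 1) (by simp) (by simp)
  rw [hbelow, habove, sum_words_weightBelow_eq_sum_permutitions q hI,
    ← eval_reducedPolynomial] at hcount
  rw [g_eq_arrangementSum q hI, ← hcount]
  field_simp

end Permutitions

/-- summing over all compositions `I` of `n`, the reduced polynomials
`P_I(q) = n!·g_I(q)/(1−q)^{ℓ(I)}` (exhibited here as genuine polynomials, so that the
statement also makes sense at `q = 1`) satisfy
`Σ_I P_I(q) = Σ_π q^{sinv(π)}`, the right sum ranging over all permutitions of size `n`;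
in particular at `q = 1` the left side counts all permutitions of size `n`. -/
theorem sum_reduced_polynomials_eq_sum_over_permutitions (n : ℕ) (hn : 0 < n) :
    ∃ P : List ℕ → Polynomial ℝ,
      (∀ I : List ℕ, (∀ i ∈ I, 0 < i) → I.sum = n →
        ∀ q : ℝ, (Nat.factorial n : ℝ) * g q I = (1 - q) ^ I.length * (P I).eval q) ∧
      ∀ q : ℝ,
        (∑ᶠ I ∈ {I : List ℕ | (∀ i ∈ I, 0 < i) ∧ I.sum = n}, (P I).eval q) =
          ∑ᶠ L ∈ {L : List (List ℕ) | IsPermutition n L}, q ^ sinv L := by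
  refine ⟨reducedPolynomial, fun I hI hsum q => hsum ▸ factorial_mul_g q hI, fun q => ?_⟩
  rw [finsum_mem_eq_finite_toFinset_sum _ (finite_setOf_compositions n),
    finsum_mem_eq_finite_toFinset_sum _ (finite_setOf_isPermutition n)]
  have hshape : ∀ L ∈ permutitions n, shape L ∈ (finite_setOf_compositions n).toFinset :=
    fun L hL => (Set.Finite.mem_toFinset _).2 (mem_permutitions.1 hL).shape_mem
  rw [← permutitions, ← Finset.sum_fiberwise_of_maps_to hshape]
  refine Finset.sum_congr rfl fun I hI => ?_
  obtain ⟨-, rfl⟩ := (Set.Finite.mem_toFinset _).1 hI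
  exact eval_reducedPolynomial q I
end
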